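/- arXiv:1105.4489 — 3 statements merged into one kernel-verified Lean document; each statement's English description precedes it below -/
import Mathlib

section
/- Let μ be the Lie algebra law of g_{1.17} and let μ̃ be the law on ℝ⁷ with nonzero brackets [e_1,e_2] = (√611/94)e_3, [e_1,e_3] = (√235/47)e_5, [e_1,e_5] = (√611/94)e_6, [e_2,e_3] = (√235/94)e_4, [e_2,e_4] = (√611/94)e_6, [e_2,e_6] = (√705/94)e_7, [e_3,e_5] = −(√705/94)e_7. Let g : ℝ⁷ → ℝ⁷ be the linear map whose matrix in the canonical basis has rows (1,−1,0,0,0,0,0), (√2,√2,0,0,0,0,0), (0,0,√1222/47,0,0,0,0), (0,0,0,√65/47,√65/47,0,0), (0,0,0,√130/47,−√130/47,0,0), (0,0,0,0,0,13√470/2209,0), (0,0,0,0,0,0,65√3/2209). Then g is invertible and g μ(x,y) = μ̃(g x, g y) for all x, y ∈ ℝ⁷; that is, g·μ = μ̃, so the Lie algebras (ℝ⁷, μ) and (ℝ⁷, μ̃) are isomorphic. -/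
open Matrix BigOperators Polynomial

noncomputable section

abbrev Law (n : ℕ) := (Fin n → ℝ) → (Fin n → ℝ) → (Fin n → ℝ)

/-- `i`-th canonical basis vector of `ℝ^n`. -/
def bVec {n : ℕ} (i : Fin n) : Fin n → ℝ := Pi.single i 1

def IsBilin {n : ℕ} (μ : Law n) : Prop :=
  (∀ X, IsLinearMap ℝ (μ X)) ∧ (∀ Y, IsLinearMap ℝ (fun X => μ X Y))

def IsSkew {n : ℕ} (μ : Law n) : Prop := ∀ X Y, μ X Y = - μ Y X

def IsJacobi {n : ℕ} (μ : Law n) : Prop :=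
  ∀ X Y Z, μ (μ X Y) Z + μ (μ Y Z) X + μ (μ Z X) Y = 0

def IsLieLaw {n : ℕ} (μ : Law n) : Prop := IsBilin μ ∧ IsSkew μ ∧ IsJacobi μ

/-- lower central series of the law `μ`. -/
def lcs {n : ℕ} (μ : Law n) : ℕ → Submodule ℝ (Fin n → ℝ)
  | 0 => ⊤
  | k + 1 => Submodule.span ℝ {z | ∃ x y, y ∈ lcs μ k ∧ z = μ x y}

def IsNilpotentLaw {n : ℕ} (μ : Law n) : Prop :=
  IsLieLaw μ ∧ ∃ k, lcs μ k = ⊥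

/-- the action of `GL_n(ℝ)` on laws: `(g·μ)(X,Y) = g μ(g⁻¹X, g⁻¹Y)`. -/
def act {n : ℕ} (g : GL (Fin n) ℝ) (μ : Law n) : Law n :=
  fun X Y =>
    (g : Matrix (Fin n) (Fin n) ℝ).mulVec
      (μ (((g⁻¹ : GL (Fin n) ℝ) : Matrix (Fin n) (Fin n) ℝ).mulVec X)
         (((g⁻¹ : GL (Fin n) ℝ) : Matrix (Fin n) (Fin n) ℝ).mulVec Y))

def IsDerivation {n : ℕ} (μ : Law n) (ψ : Matrix (Fin n) (Fin n) ℝ) : Prop :=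
  ∀ X Y, ψ.mulVec (μ X Y) = μ (ψ.mulVec X) Y + μ X (ψ.mulVec Y)

/-- the unnormalized moment map `m(μ) = 4 Ric_μ`, as a matrix in the canonical basis. -/
def momentMap {n : ℕ} (μ : Law n) : Matrix (Fin n) (Fin n) ℝ :=
  Matrix.of fun k l =>
    4 * (-(1/2) * ∑ i, ∑ j, μ (bVec k) (bVec i) j * μ (bVec l) (bVec i) j
      + (1/4) * ∑ i, ∑ j, μ (bVec i) (bVec j) k * μ (bVec i) (bVec j) l)

def IsEinsteinNilradical {n : ℕ} (μ : Law n) : Prop :=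
  ∃ g : GL (Fin n) ℝ, ∃ c : ℝ, ∃ φ : Matrix (Fin n) (Fin n) ℝ,
    c < 0 ∧ φ.IsSymm ∧ IsDerivation (act g μ) φ ∧
    momentMap (act g μ) = c • (1 : Matrix (Fin n) (Fin n) ℝ) + φ

/-- build a (bilinear) law from a table `c` of structure constants on the
canonical basis, antisymmetrized: `[e_i, e_j] = c i j - c j i`. -/
def mkLaw {n : ℕ} (c : Fin n → Fin n → Fin n → ℝ) : Law n :=
  fun X Y k => ∑ i, ∑ j, X i * Y j * (c i j k - c j i k)

/-- structure constants of the law `μ̃` from Example 1 (a nilsoliton law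
isomorphic to `g_{1.17}`). -/
def cTilde : Fin 7 → Fin 7 → Fin 7 → ℝ := fun i j =>
  if i = 0 ∧ j = 1 then Pi.single 2 (Real.sqrt 611 / 94)
  else if i = 0 ∧ j = 2 then Pi.single 4 (Real.sqrt 235 / 47)
  else if i = 0 ∧ j = 4 then Pi.single 5 (Real.sqrt 611 / 94)
  else if i = 1 ∧ j = 2 then Pi.single 3 (Real.sqrt 235 / 94)
  else if i = 1 ∧ j = 3 then Pi.single 5 (Real.sqrt 611 / 94)
  else if i = 1 ∧ j = 5 then Pi.single 6 (Real.sqrt 705 / 94)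
  else if i = 2 ∧ j = 4 then Pi.single 6 (-(Real.sqrt 705 / 94))
  else 0

/-- the law `μ̃`. -/
def lawTilde : Law 7 := mkLaw cTilde


/-- structure constants of `g_{1.17}`. -/
def c117 : Fin 7 → Fin 7 → Fin 7 → ℝ := fun i j =>
  if i = 0 ∧ j = 1 then Pi.single 2 1
  else if i = 0 ∧ j = 2 then Pi.single 3 1
  else if i = 0 ∧ j = 3 then Pi.single 5 1
  else if i = 0 ∧ j = 5 then Pi.single 6 1
  else if i = 1 ∧ j = 2 then Pi.single 4 1
  else if i = 1 ∧ j = 4 then Pi.single 5 1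
  else if i = 1 ∧ j = 5 then Pi.single 6 1
  else if i = 2 ∧ j = 3 then Pi.single 6 (-1)
  else if i = 2 ∧ j = 4 then Pi.single 6 1
  else 0

/-- the Lie algebra law of `g_{1.17}`. -/
def law117 : Law 7 := mkLaw c117

/-- the explicit matrix `g` of Example 1. -/
def gIso : Matrix (Fin 7) (Fin 7) ℝ :=
  Matrix.of
    ![![1, -1, 0, 0, 0, 0, 0],
      ![Real.sqrt 2, Real.sqrt 2, 0, 0, 0, 0, 0],
      ![0, 0, Real.sqrt 1222 / 47, 0, 0, 0, 0],
      ![0, 0, 0, Real.sqrt 65 / 47, Real.sqrt 65 / 47, 0, 0],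
      ![0, 0, 0, Real.sqrt 130 / 47, -(Real.sqrt 130 / 47), 0, 0],
      ![0, 0, 0, 0, 0, 13 * Real.sqrt 470 / 2209, 0],
      ![0, 0, 0, 0, 0, 0, 65 * Real.sqrt 3 / 2209]]

theorem sqrt_aux (a b c d : ℝ) (ha : 0 ≤ a) (hd : 0 ≤ d) (h : a * b = d ^ 2 * c) :
    Real.sqrt a * Real.sqrt b = d * Real.sqrt c := by
  rw [← Real.sqrt_mul ha, h, Real.sqrt_mul (sq_nonneg d), Real.sqrt_sq hd]

theorem law117_eq (x y : Fin 7 → ℝ) : law117 x y =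
    ![0, 0, x 0 * y 1 - x 1 * y 0, x 0 * y 2 - x 2 * y 0, x 1 * y 2 - x 2 * y 1,
      (x 0 * y 3 - x 3 * y 0) + (x 1 * y 4 - x 4 * y 1),
      (x 0 * y 5 - x 5 * y 0) + (x 1 * y 5 - x 5 * y 1) - (x 2 * y 3 - x 3 * y 2)
        + (x 2 * y 4 - x 4 * y 2)] := by
  funext k
  fin_cases k <;> simp [law117, mkLaw, c117, Fin.sum_univ_seven, Pi.single_apply] <;> ring

theorem lawTilde_eq (x y : Fin 7 → ℝ) : lawTilde x y =
    ![0, 0, Real.sqrt 611 / 94 * (x 0 * y 1 - x 1 * y 0),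
      Real.sqrt 235 / 94 * (x 1 * y 2 - x 2 * y 1),
      Real.sqrt 235 / 47 * (x 0 * y 2 - x 2 * y 0),
      Real.sqrt 611 / 94 * ((x 0 * y 4 - x 4 * y 0) + (x 1 * y 3 - x 3 * y 1)),
      Real.sqrt 705 / 94 * ((x 1 * y 5 - x 5 * y 1) - (x 2 * y 4 - x 4 * y 2))] := by
  funext k
  fin_cases k <;> simp [lawTilde, mkLaw, cTilde, Fin.sum_univ_seven, Pi.single_apply] <;> ring

theorem gIso_mulVec (x : Fin 7 → ℝ) : gIso.mulVec x =
    ![x 0 - x 1, Real.sqrt 2 * (x 0 + x 1), Real.sqrt 1222 / 47 * x 2,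
      Real.sqrt 65 / 47 * (x 3 + x 4), Real.sqrt 130 / 47 * (x 3 - x 4),
      13 * Real.sqrt 470 / 2209 * x 5, 65 * Real.sqrt 3 / 2209 * x 6] := by
  funext k
  fin_cases k <;> simp [gIso, Matrix.mulVec, dotProduct, Fin.sum_univ_succ] <;> ring

theorem gIso_isUnit : IsUnit gIso := by
  rw [← Matrix.mulVec_injective_iff_isUnit]
  intro x y h
  have pos : ∀ a : ℝ, 0 < a → Real.sqrt a ≠ 0 := fun a ha => (Real.sqrt_pos.2 ha).ne'
  have p2 := pos 2 (by norm_num)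
  have p1222 := pos 1222 (by norm_num)
  have p65 := pos 65 (by norm_num)
  have p130 := pos 130 (by norm_num)
  have p470 := pos 470 (by norm_num)
  have p3 := pos 3 (by norm_num)
  simp only [gIso_mulVec] at h
  have e := fun k => congrFun h k
  have e0 : x 0 - x 1 = y 0 - y 1 := e 0
  have e1 : x 0 + x 1 = y 0 + y 1 := mul_left_cancel₀ p2 (e 1)
  have e2 : x 2 = y 2 := mul_left_cancel₀ (by positivity) (e 2)
  have e3 : x 3 + x 4 = y 3 + y 4 :=
    mul_left_cancel₀ (a := Real.sqrt 65 / 47) (by positivity) (e 3)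
  have e4 : x 3 - x 4 = y 3 - y 4 :=
    mul_left_cancel₀ (a := Real.sqrt 130 / 47) (by positivity) (e 4)
  have e5 : x 5 = y 5 := mul_left_cancel₀ (by positivity) (e 5)
  have e6 : x 6 = y 6 := mul_left_cancel₀ (by positivity) (e 6)
  funext k
  fin_cases k <;> simp <;> linarith

/-- `g` is invertible and `g·μ = μ̃`, so `(ℝ⁷, μ)` and `(ℝ⁷, μ̃)`
are isomorphic Lie algebras. -/
theorem stmt_5 :
    IsUnit gIso ∧
    (∀ x y : Fin 7 → ℝ,
      gIso.mulVec (law117 x y) = lawTilde (gIso.mulVec x) (gIso.mulVec y)) := by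
  refine ⟨gIso_isUnit, fun x y => ?_⟩
  have h1 := sqrt_aux 611 2 1222 1 (by norm_num) (by norm_num) (by norm_num)
  have h2a := sqrt_aux 235 1222 130 47 (by norm_num) (by norm_num) (by norm_num)
  have h2b := sqrt_aux 2 130 65 2 (by norm_num) (by norm_num) (by norm_num)
  have h4 := sqrt_aux 611 130 470 13 (by norm_num) (by norm_num) (by norm_num)
  have h4a := sqrt_aux 2 65 130 1 (by norm_num) (by norm_num) (by norm_num)
  have h5a := sqrt_aux 2 470 235 2 (by norm_num) (by norm_num) (by norm_num)
  have h5b := sqrt_aux 705 235 3 235 (by norm_num) (by norm_num) (by norm_num)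
  have h6a := sqrt_aux 1222 130 235 26 (by norm_num) (by norm_num) (by norm_num)
  have h2 : √235 * √2 * √1222 = 94 * √65 := by
    linear_combination √2 * h2a + 47 * h2b
  have h4' : √611 * √2 * √65 = 13 * √470 := by
    linear_combination √611 * h4a + h4
  have h5 : √705 * √2 * √470 = 470 * √3 := by
    linear_combination √705 * h5a + 2 * h5b
  have h6 : √705 * √1222 * √130 = 6110 * √3 := by
    linear_combination √705 * h6a + 26 * h5b
  rw [lawTilde_eq, law117_eq, gIso_mulVec, gIso_mulVec, gIso_mulVec]
  funext k
  fin_cases k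
  · simp
  · simp
  · simp
    linear_combination (-(x 0 * y 1 - x 1 * y 0) / 47) * h1
  · simp
    linear_combination (-((x 0 + x 1) * y 2 - x 2 * (y 0 + y 1)) / (94 * 47)) * h2
  · simp
    linear_combination (-((x 0 - x 1) * y 2 - x 2 * (y 0 - y 1)) / (47 * 47)) * h2a
  · simp
    linear_combination (-((x 0 - x 1) * (y 3 - y 4) - (x 3 - x 4) * (y 0 - y 1)) / (94 * 47)) * h4
      - (((x 0 + x 1) * (y 3 + y 4) - (x 3 + x 4) * (y 0 + y 1)) / (94 * 47)) * h4'
  · simp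
    linear_combination (-13 * ((x 0 + x 1) * y 5 - x 5 * (y 0 + y 1)) / (94 * 2209)) * h5
      + ((x 2 * (y 3 - y 4) - (x 3 - x 4) * y 2) / (94 * 2209)) * h6
end
end

section
/- Let μ be the Lie algebra law of g_{2.2} and μ̃₀ the law on ℝ⁷ with nonzero brackets [e_1,e_2]=e_5, [e_1,e_3]=e_6, [e_1,e_4]=2e_7, [e_2,e_3]=e_4, [e_2,e_6]=e_7, [e_3,e_5]=−e_7. Then the space of derivations of (ℝ⁷,μ) has dimension 15, the space of derivations of (ℝ⁷,μ̃₀) has dimension 17, and consequently the Lie algebras (ℝ⁷,μ) and (ℝ⁷,μ̃₀) are not isomorphic. -/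
open Matrix BigOperators Polynomial

noncomputable section

/-- structure constants of `g_{2.2}`. -/
def c22 : Fin 7 → Fin 7 → Fin 7 → ℝ := fun i j =>
  if i = 0 ∧ j = 1 then Pi.single 4 1
  else if i = 0 ∧ j = 2 then Pi.single 5 1
  else if i = 0 ∧ j = 3 then Pi.single 6 2
  else if i = 1 ∧ j = 2 then Pi.single 3 1
  else if i = 1 ∧ j = 5 then Pi.single 6 1
  else if i = 2 ∧ j = 4 then Pi.single 6 (-1)
  else if i = 2 ∧ j = 5 then Pi.single 6 1
  else 0

/-- the Lie algebra law of `g_{2.2}`. -/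
def law22 : Law 7 := mkLaw c22

/-- structure constants of the degeneration `μ̃₀` of `g_{2.2}`. -/
def c22t : Fin 7 → Fin 7 → Fin 7 → ℝ := fun i j =>
  if i = 0 ∧ j = 1 then Pi.single 4 1
  else if i = 0 ∧ j = 2 then Pi.single 5 1
  else if i = 0 ∧ j = 3 then Pi.single 6 2
  else if i = 1 ∧ j = 2 then Pi.single 3 1
  else if i = 1 ∧ j = 5 then Pi.single 6 1
  else if i = 2 ∧ j = 4 then Pi.single 6 (-1)
  else 0

/-- the law `μ̃₀`. -/
def law22t : Law 7 := mkLaw c22t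

lemma law22_eq (X Y : Fin 7 → ℝ) : law22 X Y = ![0, 0, 0, X 1 * Y 2 - X 2 * Y 1,
    X 0 * Y 1 - X 1 * Y 0, X 0 * Y 2 - X 2 * Y 0,
    2 * (X 0 * Y 3 - X 3 * Y 0) + (X 1 * Y 5 - X 5 * Y 1) - (X 2 * Y 4 - X 4 * Y 2)
      + (X 2 * Y 5 - X 5 * Y 2)] := by
  funext k
  fin_cases k <;> simp [law22, mkLaw, c22, Fin.sum_univ_seven, Pi.single_apply] <;> ring

lemma law22t_eq (X Y : Fin 7 → ℝ) : law22t X Y = ![0, 0, 0, X 1 * Y 2 - X 2 * Y 1,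
    X 0 * Y 1 - X 1 * Y 0, X 0 * Y 2 - X 2 * Y 0,
    2 * (X 0 * Y 3 - X 3 * Y 0) + (X 1 * Y 5 - X 5 * Y 1) - (X 2 * Y 4 - X 4 * Y 2)] := by
  funext k
  fin_cases k <;> simp [law22t, mkLaw, c22t, Fin.sum_univ_seven, Pi.single_apply] <;> ring

/-- general derivation of `law22` -/
def M15 (v : Fin 15 → ℝ) : Matrix (Fin 7) (Fin 7) ℝ :=
  !![v 0, 0, 0, 0, 0, 0, 0;
     0, v 1, v 2, 0, 0, 0, 0;
     0, 0, v 1, 0, 0, 0, 0;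
     v 3, v 4, v 5, 2 * v 1, 0, 0, 0;
     v 6, v 7, v 8, 0, v 0 + v 1, v 2, 0;
     v 9, v 10, v 11, 0, 0, v 0 + v 1, 0;
     v 12, v 13, v 14, v 11 - v 10 + v 7, 2 * v 4 - v 9, 2 * v 5 - v 9 + v 6, 2 * v 1 + v 0]

/-- general derivation of `law22t` -/
def M17 (v : Fin 17 → ℝ) : Matrix (Fin 7) (Fin 7) ℝ :=
  !![v 0, 0, 0, 0, 0, 0, 0;
     0, v 1, v 2, 0, 0, 0, 0;
     0, v 15, v 16, 0, 0, 0, 0;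
     v 3, v 4, v 5, v 1 + v 16, 0, 0, 0;
     v 6, v 7, v 8, 0, v 0 + v 1, v 2, 0;
     v 9, v 10, v 11, 0, v 15, v 0 + v 16, 0;
     v 12, v 13, v 14, v 11 + v 7, 2 * v 4 - v 9, 2 * v 5 + v 6, v 1 + v 16 + v 0]

def L15 : (Fin 15 → ℝ) →ₗ[ℝ] Matrix (Fin 7) (Fin 7) ℝ where
  toFun := M15
  map_add' v w := by
    ext i j
    fin_cases i <;> fin_cases j <;> simp [M15] <;> ring
  map_smul' a v := by
    ext i j
    fin_cases i <;> fin_cases j <;> simp [M15] <;> ring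

def L17 : (Fin 17 → ℝ) →ₗ[ℝ] Matrix (Fin 7) (Fin 7) ℝ where
  toFun := M17
  map_add' v w := by
    ext i j
    fin_cases i <;> fin_cases j <;> simp [M17] <;> ring
  map_smul' a v := by
    ext i j
    fin_cases i <;> fin_cases j <;> simp [M17] <;> ring

/-- coordinates -/
def C15 (A : Matrix (Fin 7) (Fin 7) ℝ) : Fin 15 → ℝ :=
  ![A 0 0, A 1 1, A 1 2, A 3 0, A 3 1, A 3 2, A 4 0, A 4 1, A 4 2, A 5 0, A 5 1, A 5 2,
    A 6 0, A 6 1, A 6 2]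

def C17 (A : Matrix (Fin 7) (Fin 7) ℝ) : Fin 17 → ℝ :=
  ![A 0 0, A 1 1, A 1 2, A 3 0, A 3 1, A 3 2, A 4 0, A 4 1, A 4 2, A 5 0, A 5 1, A 5 2,
    A 6 0, A 6 1, A 6 2, A 2 1, A 2 2]

lemma L15_inj : Function.Injective L15 := by
  have h : Function.LeftInverse C15 L15 := by
    intro v
    funext i
    fin_cases i <;> rfl
  exact h.injective

lemma L17_inj : Function.Injective L17 := by
  have h : Function.LeftInverse C17 L17 := by
    intro v
    funext i
    fin_cases i <;> rfl
  exact h.injective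

lemma der_M15 (v : Fin 15 → ℝ) : IsDerivation law22 (M15 v) := by
  intro X Y
  simp only [law22_eq]
  funext k
  fin_cases k <;> simp [M15, Matrix.mulVec, dotProduct, Fin.sum_univ_seven] <;> ring

lemma der_M17 (v : Fin 17 → ℝ) : IsDerivation law22t (M17 v) := by
  intro X Y
  simp only [law22t_eq]
  funext k
  fin_cases k <;> simp [M17, Matrix.mulVec, dotProduct, Fin.sum_univ_seven] <;> ring

lemma der_basis {μ : Law 7} {A : Matrix (Fin 7) (Fin 7) ℝ} (h : IsDerivation μ A) (i j m : Fin 7) :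
    (A.mulVec (μ (Pi.single i 1) (Pi.single j 1))) m =
      μ (fun k => A k i) (Pi.single j 1) m + μ (Pi.single i 1) (fun k => A k j) m := by
  have := congrFun (h (Pi.single i 1) (Pi.single j 1)) m
  simp only [Matrix.mulVec_single_one] at this
  exact this

lemma M15_der {A : Matrix (Fin 7) (Fin 7) ℝ} (h : IsDerivation law22 A) : M15 (C15 A) = A := by
  have H := der_basis h
  simp only [law22_eq] at H
  have h010 := H 0 1 0
  have h011 := H 0 1 1
  have h012 := H 0 1 2
  have h020 := H 0 2 0
  have h021 := H 0 2 1
  have h022 := H 0 2 2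
  have h030 := H 0 3 0
  have h031 := H 0 3 1
  have h032 := H 0 3 2
  have h033 := H 0 3 3
  have h120 := H 1 2 0
  have h121 := H 1 2 1
  have h122 := H 1 2 2
  have h155 := H 1 5 5
  have h244 := H 2 4 4
  have h013 := H 0 1 3
  have h015 := H 0 1 5
  have h023 := H 0 2 3
  have h024 := H 0 2 4
  have h046 := H 0 4 6
  have h124 := H 1 2 4
  have h125 := H 1 2 5
  have h136 := H 1 3 6
  have h014 := H 0 1 4
  have h016 := H 0 1 6
  have h025 := H 0 2 5
  have h036 := H 0 3 6
  have h056 := H 0 5 6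
  have h123 := H 1 2 3
  have h236 := H 2 3 6
  have h026 := H 0 2 6
  have h126 := H 1 2 6
  have h156 := H 1 5 6
  have h256 := H 2 5 6
  clear H h
  simp [Matrix.mulVec, dotProduct, Fin.sum_univ_seven] at h010 h011 h012 h020 h021 h022 h030 h031 h032 h033 h120 h121 h122 h155 h244 h013 h015 h023 h024 h046 h124 h125 h136 h014 h016 h025 h036 h056 h123 h236 h026 h126 h156 h256
  ext i j
  fin_cases i <;> fin_cases j <;> simp [M15, C15] <;> linarith

lemma M17_der {A : Matrix (Fin 7) (Fin 7) ℝ} (h : IsDerivation law22t A) : M17 (C17 A) = A := by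
  have H := der_basis h
  simp only [law22t_eq] at H
  have h010 := H 0 1 0
  have h011 := H 0 1 1
  have h012 := H 0 1 2
  have h020 := H 0 2 0
  have h021 := H 0 2 1
  have h022 := H 0 2 2
  have h030 := H 0 3 0
  have h031 := H 0 3 1
  have h032 := H 0 3 2
  have h033 := H 0 3 3
  have h120 := H 1 2 0
  have h121 := H 1 2 1
  have h122 := H 1 2 2
  have h155 := H 1 5 5
  have h244 := H 2 4 4
  have h013 := H 0 1 3
  have h015 := H 0 1 5
  have h023 := H 0 2 3
  have h024 := H 0 2 4
  have h046 := H 0 4 6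
  have h056 := H 0 5 6
  have h124 := H 1 2 4
  have h125 := H 1 2 5
  have h136 := H 1 3 6
  have h236 := H 2 3 6
  have h014 := H 0 1 4
  have h016 := H 0 1 6
  have h025 := H 0 2 5
  have h026 := H 0 2 6
  have h036 := H 0 3 6
  have h123 := H 1 2 3
  have h126 := H 1 2 6
  clear H h
  simp [Matrix.mulVec, dotProduct, Fin.sum_univ_seven] at h010 h011 h012 h020 h021 h022 h030 h031 h032 h033 h120 h121 h122 h155 h244 h013 h015 h023 h024 h046 h056 h124 h125 h136 h236 h014 h016 h025 h026 h036 h123 h126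
  ext i j
  fin_cases i <;> fin_cases j <;> simp [M17, C17] <;> linarith

/-- the derivation algebras of `g_{2.2}` and of its degeneration
`μ̃₀` have dimensions 15 and 17 respectively; consequently the two Lie algebras
are not isomorphic. -/
theorem stmt_11 :
    Module.finrank ℝ
      (Submodule.span ℝ {ψ : Matrix (Fin 7) (Fin 7) ℝ | IsDerivation law22 ψ}) = 15 ∧
    Module.finrank ℝ
      (Submodule.span ℝ {ψ : Matrix (Fin 7) (Fin 7) ℝ | IsDerivation law22t ψ}) = 17 ∧
    ¬ ∃ T : (Fin 7 → ℝ) ≃ₗ[ℝ] (Fin 7 → ℝ),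
        ∀ x y, T (law22 x y) = law22t (T x) (T y) := by
  have s15 : (Submodule.span ℝ {ψ : Matrix (Fin 7) (Fin 7) ℝ | IsDerivation law22 ψ})
      = LinearMap.range L15 := by
    have : {ψ : Matrix (Fin 7) (Fin 7) ℝ | IsDerivation law22 ψ} = (LinearMap.range L15 : Set _) := by
      ext A
      constructor
      · intro h
        exact ⟨C15 A, M15_der h⟩
      · rintro ⟨v, rfl⟩
        exact der_M15 v
    rw [this, Submodule.span_eq]
  have s17 : (Submodule.span ℝ {ψ : Matrix (Fin 7) (Fin 7) ℝ | IsDerivation law22t ψ})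
      = LinearMap.range L17 := by
    have : {ψ : Matrix (Fin 7) (Fin 7) ℝ | IsDerivation law22t ψ} = (LinearMap.range L17 : Set _) := by
      ext A
      constructor
      · intro h
        exact ⟨C17 A, M17_der h⟩
      · rintro ⟨v, rfl⟩
        exact der_M17 v
    rw [this, Submodule.span_eq]
  have d15 : Module.finrank ℝ
      (Submodule.span ℝ {ψ : Matrix (Fin 7) (Fin 7) ℝ | IsDerivation law22 ψ}) = 15 := by
    rw [s15, LinearMap.finrank_range_of_inj L15_inj]; simp
  have d17 : Module.finrank ℝ
      (Submodule.span ℝ {ψ : Matrix (Fin 7) (Fin 7) ℝ | IsDerivation law22t ψ}) = 17 := by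
    rw [s17, LinearMap.finrank_range_of_inj L17_inj]; simp
  refine ⟨d15, d17, ?_⟩
  rintro ⟨T, hT⟩
  have hT' : ∀ x y, T.symm (law22t x y) = law22 (T.symm x) (T.symm y) := by
    intro x y
    rw [LinearEquiv.symm_apply_eq, hT]; simp
  let L : Matrix (Fin 7) (Fin 7) ℝ →ₗ[ℝ] Matrix (Fin 7) (Fin 7) ℝ :=
    (LinearMap.toMatrix').toLinearMap ∘ₗ (T.symm.conj).toLinearMap ∘ₗ (Matrix.toLin').toLinearMap
  have hL : Function.Injective L := by
    intro a b hab
    simpa [L] using hab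
  have hder : ∀ ψ, IsDerivation law22t ψ → IsDerivation law22 (L ψ) := by
    intro ψ h X Y
    have key : ∀ Z, (L ψ).mulVec Z = T.symm (ψ.mulVec (T Z)) := by
      intro Z
      rw [← Matrix.toLin'_apply]
      simp [L, LinearEquiv.conj_apply]
    rw [key, key, key, hT, h, map_add, hT', hT']
    simp
  have hle : Submodule.map L
      (Submodule.span ℝ {ψ : Matrix (Fin 7) (Fin 7) ℝ | IsDerivation law22t ψ}) ≤
      Submodule.span ℝ {ψ : Matrix (Fin 7) (Fin 7) ℝ | IsDerivation law22 ψ} := by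
    rw [Submodule.map_span]
    apply Submodule.span_mono
    rintro _ ⟨ψ, h, rfl⟩
    exact hder ψ h
  have := Submodule.finrank_mono hle
  rw [← (Submodule.equivMapOfInjective L hL _).finrank_eq, d15, d17] at this
  omega
end
end

section
/- For every λ ∈ ℝ with λ ≠ 0 and λ ≠ 1, the 7-dimensional nilpotent Lie algebra g_{3.1(i_λ)} is an Einstein nilradical. -/
open Matrix BigOperators Polynomial

noncomputable section

/-- structure constants of `g_{3.1(i_λ)}`. -/
def c31 (lam : ℝ) : Fin 7 → Fin 7 → Fin 7 → ℝ := fun i j =>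
  if i = 0 ∧ j = 1 then Pi.single 3 1
  else if i = 0 ∧ j = 2 then Pi.single 4 1
  else if i = 0 ∧ j = 5 then Pi.single 6 1
  else if i = 1 ∧ j = 2 then Pi.single 5 1
  else if i = 1 ∧ j = 4 then Pi.single 6 lam
  else if i = 2 ∧ j = 3 then Pi.single 6 (lam - 1)
  else 0

/-- the Lie algebra law of `g_{3.1(i_λ)}`. -/
def law31 (lam : ℝ) : Law 7 := mkLaw (c31 lam)


/-- The explicit law of the rescaled algebra. -/
def expl (p q e f : ℝ) : Law 7 := fun X Y =>
  ![0, 0, 0, p * (X 0 * Y 1 - X 1 * Y 0), q * (X 0 * Y 2 - X 2 * Y 0),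
    X 1 * Y 2 - X 2 * Y 1,
    (X 0 * Y 5 - X 5 * Y 0) + e * (X 1 * Y 4 - X 4 * Y 1) + f * (X 2 * Y 3 - X 3 * Y 2)]

lemma law31_eq (lam : ℝ) : law31 lam = expl 1 1 lam (lam - 1) := by
  funext X Y k
  simp only [law31, mkLaw, c31, expl, Fin.sum_univ_seven]
  fin_cases k <;> simp [Pi.single_apply] <;> ring

def gd (p q : ℝ) : Fin 7 → ℝ := ![1, 1, 1, p, q, 1, 1]
def gdi (p q : ℝ) : Fin 7 → ℝ := ![1, 1, 1, p⁻¹, q⁻¹, 1, 1]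

lemma gd_mul (p q : ℝ) (hp : p ≠ 0) (hq : q ≠ 0) :
    Matrix.diagonal (gd p q) * Matrix.diagonal (gdi p q) = 1 := by
  rw [Matrix.diagonal_mul_diagonal, ← Matrix.diagonal_one]
  congr 1
  funext i
  fin_cases i <;> simp [gd, gdi, hp, hq]

lemma gd_mul_rev (p q : ℝ) (hp : p ≠ 0) (hq : q ≠ 0) :
    Matrix.diagonal (gdi p q) * Matrix.diagonal (gd p q) = 1 := by
  rw [Matrix.diagonal_mul_diagonal, ← Matrix.diagonal_one]
  congr 1
  funext i
  fin_cases i <;> simp [gd, gdi, hp, hq]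

def gG (p q : ℝ) (hp : p ≠ 0) (hq : q ≠ 0) : GL (Fin 7) ℝ :=
  ⟨Matrix.diagonal (gd p q), Matrix.diagonal (gdi p q), gd_mul p q hp hq, gd_mul_rev p q hp hq⟩

lemma act_eq (lam p q : ℝ) (hp : p ≠ 0) (hq : q ≠ 0) :
    act (gG p q hp hq) (law31 lam) = expl p q (lam * q⁻¹) ((lam - 1) * p⁻¹) := by
  rw [law31_eq]
  funext X Y k
  change ((Matrix.diagonal (gd p q)).mulVec (expl 1 1 lam (lam - 1)
    ((Matrix.diagonal (gdi p q)).mulVec X) ((Matrix.diagonal (gdi p q)).mulVec Y))) k = _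
  rw [Matrix.mulVec_diagonal]
  fin_cases k <;> simp [expl, Matrix.mulVec_diagonal, gd, gdi] <;> ring

def wt (t : ℝ) : Fin 7 → ℝ := ![t, t, t, 2 * t, 2 * t, 2 * t, 3 * t]

lemma der_expl (p q e f t : ℝ) : IsDerivation (expl p q e f) (Matrix.diagonal (wt t)) := by
  intro X Y
  funext k
  rw [Matrix.mulVec_diagonal]
  fin_cases k <;> simp [expl, Matrix.mulVec_diagonal, wt] <;> ring

set_option maxHeartbeats 4000000 in
lemma moment_expl (p q e f : ℝ) (he : e ^ 2 = q ^ 2) (hf : f ^ 2 = p ^ 2) :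
    momentMap (expl p q e f) = (-4 * (p ^ 2 + q ^ 2 + 1)) • (1 : Matrix (Fin 7) (Fin 7) ℝ)
      + Matrix.diagonal (wt (2 * (p ^ 2 + q ^ 2 + 1))) := by
  ext k l
  simp only [momentMap, Matrix.of_apply, Fin.sum_univ_seven]
  fin_cases k <;> fin_cases l <;>
    simp [expl, bVec, wt, Matrix.one_apply, Matrix.diagonal_apply] <;> linarith

/-- for every `λ ≠ 0, 1`, `g_{3.1(i_λ)}` is an Einstein nilradical. -/
theorem stmt_14 (lam : ℝ) (h0 : lam ≠ 0) (h1 : lam ≠ 1) :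
    IsEinsteinNilradical (law31 lam) := by
  have hp : √|lam - 1| ≠ 0 := (Real.sqrt_pos.2 (abs_pos.2 (sub_ne_zero.2 h1))).ne'
  have hq : √|lam| ≠ 0 := (Real.sqrt_pos.2 (abs_pos.2 h0)).ne'
  have key : ∀ x : ℝ, √|x| ≠ 0 → (x * (√|x|)⁻¹) ^ 2 = √|x| ^ 2 := by
    intro x hx
    have h : √|x| ^ 2 = |x| := Real.sq_sqrt (abs_nonneg x)
    have h2 : x ^ 2 = √|x| ^ 2 * √|x| ^ 2 := by rw [h, ← sq, sq_abs]
    rw [mul_pow, h2]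
    field_simp
  refine ⟨gG _ _ hp hq, -4 * (√|lam - 1| ^ 2 + √|lam| ^ 2 + 1),
    Matrix.diagonal (wt (2 * (√|lam - 1| ^ 2 + √|lam| ^ 2 + 1))), ?_, ?_, ?_, ?_⟩
  rotate_left 3
  · rw [act_eq]
    exact moment_expl _ _ _ _ (key _ hq) (key _ hp)
  · nlinarith [sq_nonneg (√|lam - 1|), sq_nonneg (√|lam|)]
  · exact Matrix.isSymm_diagonal _
  · rw [act_eq]
    exact der_expl _ _ _ _ _
end
end
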